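/- For all nonnegative integers m_1, m_2, m_3, m_4, m_5, the monomial M = x_1^{m_1}·ζ_1^{m_2}·ϑ^{m_3}·η_1^{m_4}·η_2^{m_5} is a weight vector of weight m_3·λ_3 + (m_1+m_2)·λ_4: H_1(M) = 0, H_2(M) = 0, H_3(M) = m_3·M, and H_4(M) = (m_1+m_2)·M. -/

import Mathlib

open MvPolynomial

noncomputable section

/-- The polynomial algebra `A = ℂ[x_1, …, x_26]`. -/
abbrev A : Type := MvPolynomial (Fin 26) ℂ

/-- The variable `x_r` (1-indexed), `0` out of range. -/
def x (r : ℕ) : A :=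
  if h : 1 ≤ r ∧ r ≤ 26 then X (⟨r - 1, by omega⟩ : Fin 26) else 0

/-- The partial derivative `∂_r` (1-indexed), `0` out of range. -/
def d (r : ℕ) (f : A) : A :=
  if h : 1 ≤ r ∧ r ≤ 26 then pderiv (⟨r - 1, by omega⟩ : Fin 26) f else 0

/-- Simple positive root vector actions. -/
def E1 (f : A) : A :=
  x 4 * d 6 f + x 5 * d 8 f + x 7 * d 9 f - x 18 * d 20 f - x 19 * d 22 f - x 21 * d 23 f

def E2 (f : A) : A :=
  x 3 * d 4 f + x 8 * d 10 f + x 9 * d 11 f - x 16 * d 18 f - x 17 * d 19 f - x 23 * d 24 f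

def E3 (f : A) : A :=
  -x 2 * d 3 f - x 4 * d 5 f - x 6 * d 8 f + x 10 * d 12 f + x 11 * (d 13 f - 2 * d 14 f)
    - x 14 * d 16 f - x 15 * d 17 f + x 19 * d 21 f + x 22 * d 23 f + x 24 * d 25 f

def E4 (f : A) : A :=
  -x 1 * d 2 f - x 5 * d 7 f - x 8 * d 9 f - x 10 * d 11 f + x 12 * (d 14 f - 2 * d 13 f)
    - x 13 * d 15 f + x 16 * d 17 f + x 18 * d 19 f + x 20 * d 22 f + x 25 * d 26 f

/-- Simple negative root vector actions. -/
def F1 (f : A) : A :=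
  -x 6 * d 4 f - x 8 * d 5 f - x 9 * d 7 f + x 20 * d 18 f + x 22 * d 19 f + x 23 * d 21 f

def F2 (f : A) : A :=
  -x 4 * d 3 f - x 10 * d 8 f - x 11 * d 9 f + x 18 * d 16 f + x 19 * d 17 f + x 24 * d 23 f

def F3 (f : A) : A :=
  x 3 * d 2 f + x 5 * d 4 f + x 8 * d 6 f - x 12 * d 10 f + x 14 * d 11 f
    + x 16 * (2 * d 14 f - d 13 f) + x 17 * d 15 f - x 21 * d 19 f - x 23 * d 22 f
    - x 25 * d 24 f

def F4 (f : A) : A :=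
  x 2 * d 1 f + x 7 * d 5 f + x 9 * d 8 f + x 11 * d 10 f + x 13 * d 12 f
    + x 15 * (2 * d 13 f - d 14 f) - x 17 * d 16 f - x 19 * d 18 f - x 22 * d 20 f
    - x 26 * d 25 f

/-- Cartan subalgebra basis actions. -/
def H1 (f : A) : A :=
  x 4 * d 4 f + x 5 * d 5 f - x 6 * d 6 f + x 7 * d 7 f - x 8 * d 8 f - x 9 * d 9 f
    + x 18 * d 18 f + x 19 * d 19 f - x 20 * d 20 f + x 21 * d 21 f - x 22 * d 22 f
    - x 23 * d 23 f

def H2 (f : A) : A :=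
  x 3 * d 3 f - x 4 * d 4 f + x 8 * d 8 f + x 9 * d 9 f - x 10 * d 10 f - x 11 * d 11 f
    + x 16 * d 16 f + x 17 * d 17 f - x 18 * d 18 f - x 19 * d 19 f + x 23 * d 23 f
    - x 24 * d 24 f

def H3 (f : A) : A :=
  x 2 * d 2 f - x 3 * d 3 f + x 4 * d 4 f - x 5 * d 5 f + x 6 * d 6 f - x 8 * d 8 f
    + x 10 * d 10 f + 2 * x 11 * d 11 f - x 12 * d 12 f + x 15 * d 15 f
    - 2 * x 16 * d 16 f - x 17 * d 17 f + x 19 * d 19 f - x 21 * d 21 f + x 22 * d 22 f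
    - x 23 * d 23 f + x 24 * d 24 f - x 25 * d 25 f

def H4 (f : A) : A :=
  x 1 * d 1 f - x 2 * d 2 f + x 5 * d 5 f - x 7 * d 7 f + x 8 * d 8 f - x 9 * d 9 f
    + x 10 * d 10 f - x 11 * d 11 f + 2 * x 12 * d 12 f - 2 * x 15 * d 15 f
    + x 16 * d 16 f - x 17 * d 17 f + x 18 * d 18 f - x 19 * d 19 f + x 20 * d 20 f
    - x 22 * d 22 f + x 25 * d 25 f - x 26 * d 26 f

/-- The singular vector `ζ_1`. -/
def zeta1 : A :=
  x 1 * (2 * x 13 + x 14) - 3 * x 2 * x 12 - 3 * x 3 * x 10 + 3 * x 4 * x 8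
    - 3 * x 5 * x 6

/-- The singular vector `ϑ`. -/
def theta : A :=
  x 1 * (-(x 2 * x 13) + x 1 * x 15 - x 3 * x 11 + x 4 * x 9 - x 6 * x 7)
    + x 2 * (x 2 * x 12 + x 3 * x 10 - x 4 * x 8 + x 5 * x 6)

/-- The quadratic invariant `η_1`. -/
def eta1 : A :=
  3 * ∑ r ∈ Finset.Icc 1 12, x r * x (27 - r) - x 13 ^ 2 - x 13 * x 14 - x 14 ^ 2

def zeta2 : A := F4 zeta1
def zeta3 : A := F3 zeta2
def zeta4 : A := -F2 zeta3
def zeta5 : A := F3 zeta4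
def zeta6 : A := -F1 zeta4
def zeta7 : A := F4 zeta5
def zeta8 : A := -F1 zeta5
def zeta9 : A := -F1 zeta7
def zeta10 : A := -F2 zeta8
def zeta11 : A := -F2 zeta9
def zeta12 : A := -F3 zeta10
def zeta13 : A := F4 zeta12
def zeta14 : A := F3 zeta11

/-- The algebra automorphism `τ` with `τ(x_r) = x_{27-r}` for `r ∉ {13,14}`,
`τ(x_13) = -x_13`, `τ(x_14) = -x_14` (0-indexed internally). -/
def tau : A →ₐ[ℂ] A :=
  aeval (fun i : Fin 26 =>
    if i.val = 12 then -X (⟨12, by omega⟩ : Fin 26)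
    else if i.val = 13 then -X (⟨13, by omega⟩ : Fin 26)
    else X (⟨25 - i.val, by omega⟩ : Fin 26))

/-- The family `ζ_r`, `1 ≤ r ≤ 26` (`0` out of range). -/
def zeta : ℕ → A := fun r =>
  match r with
  | 1 => zeta1 | 2 => zeta2 | 3 => zeta3 | 4 => zeta4 | 5 => zeta5 | 6 => zeta6
  | 7 => zeta7 | 8 => zeta8 | 9 => zeta9 | 10 => zeta10 | 11 => zeta11
  | 12 => zeta12 | 13 => zeta13 | 14 => zeta14
  | 15 => tau zeta12 | 16 => tau zeta11 | 17 => tau zeta10 | 18 => tau zeta9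
  | 19 => tau zeta8 | 20 => tau zeta7 | 21 => tau zeta6 | 22 => tau zeta5
  | 23 => tau zeta4 | 24 => tau zeta3 | 25 => tau zeta2 | 26 => tau zeta1
  | _ => 0

/-- The cubic invariant `η_2`. -/
def eta2 : A :=
  3 * ∑ r ∈ Finset.Icc 1 12, (zeta r * x (27 - r) + x r * zeta (27 - r))
    - 2 * x 13 * zeta 13 - x 13 * zeta 14 - x 14 * zeta 13 - 2 * x 14 * zeta 14

/-- The `F_4`-invariant Laplace operator `Δ`. -/
def Lap (f : A) : A :=
  3 * ∑ r ∈ Finset.Icc 1 12, d r (d (27 - r) f) - d 13 (d 13 f) - d 13 (d 14 f)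
    - d 14 (d 14 f)

/-!
Grade `A` by the weight lattice of `F₄`, giving `x_r` its weight. Each `H_k` multiplies `x_r` by the
`k`-th coordinate of that weight, so by Euler's identity it acts on a polynomial of weight `n` as
the scalar `n_k`. Weights add under products, `F_k` lowers them by the `k`-th simple root and `τ`
negates them; hence `ζ_r` has the weight of `x_r`, the two `η`s have weight `0`, and the weight of
the monomial can be read off.
-/

theorem exists_fin_add_one_eq {n r : ℕ} (h : 1 ≤ r ∧ r ≤ n) : ∃ i : Fin n, (i : ℕ) + 1 = r :=
  ⟨⟨r - 1, by omega⟩, Nat.sub_add_cancel h.1⟩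

theorem sum_Icc_one_eq_sum_fin {M : Type*} [AddCommMonoid M] (g : ℕ → M) (n : ℕ) :
    ∑ r ∈ Finset.Icc 1 n, g r = ∑ i : Fin n, g (i + 1) := by
  rw [Fin.sum_univ_eq_sum_range (fun i => g (i + 1)), Finset.range_eq_Ico, Finset.sum_Ico_add',
    zero_add, Finset.Ico_add_one_right_eq_Icc]

section WeightedHomogeneous

variable {σ σ' R M N : Type*} [CommSemiring R] [AddCommMonoid M] [AddCommMonoid N]
  {w : σ → M} {v : σ' → N} {m n k : M} {f g : MvPolynomial σ R}

theorem isWeightedHomogeneous_mul_of_add_eq (hf : f.IsWeightedHomogeneous w m)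
    (hg : g.IsWeightedHomogeneous w n) (h : m + n = k) : (f * g).IsWeightedHomogeneous w k :=
  h ▸ hf.mul hg

theorem isWeightedHomogeneous_ofNat_mul (c : ℕ) [c.AtLeastTwo]
    (hf : f.IsWeightedHomogeneous w n) :
    (OfNat.ofNat c * f : MvPolynomial σ R).IsWeightedHomogeneous w n := by
  rw [← map_ofNat C c]
  exact hf.C_mul _

theorem isWeightedHomogeneous_algHom (hf : f.IsWeightedHomogeneous w n)
    (Φ : MvPolynomial σ R →ₐ[R] MvPolynomial σ' R) (φ : M →+ N)
    (hΦ : ∀ i, (Φ (X i)).IsWeightedHomogeneous v (φ (w i))) :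
    (Φ f).IsWeightedHomogeneous v (φ n) := by
  induction hf using IsWeightedHomogeneous.induction_on with
  | zero => simpa only [map_zero] using isWeightedHomogeneous_zero R v (φ n)
  | add p q _ _ hp hq => simpa only [map_add] using hp.add hq
  | monomial s r hs =>
    have hprod : (s.prod fun i e => Φ (X i) ^ e).IsWeightedHomogeneous v (φ n) := by
      rw [← hs, Finsupp.weight_apply, Finsupp.sum, map_sum]
      exact .prod _ _ _ fun i _ => by simpa only [map_nsmul] using (hΦ i).pow (s i)
    simpa only [monomial_eq, map_mul, map_finsuppProd, map_pow, ← algebraMap_eq, AlgHom.commutes]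
      using hprod.C_mul r

theorem sum_map_weight_smul_X_mul_pderiv [Fintype σ] (hf : f.IsWeightedHomogeneous w n)
    (φ : M →+ R) : ∑ i, φ (w i) • (X i * pderiv i f) = φ n • f := by
  induction hf using IsWeightedHomogeneous.induction_on with
  | zero => simp only [map_zero, mul_zero, smul_zero, Finset.sum_const_zero]
  | add p q _ _ hp hq => simp only [map_add, mul_add, smul_add, Finset.sum_add_distrib, hp, hq]
  | monomial s r hs =>
    have hφ : φ n = ∑ i, φ (w i) * s i := by
      simp only [← hs, Finsupp.weight_eq_sum, map_sum, map_nsmul, nsmul_eq_mul, mul_comm]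
    simp only [X_mul_pderiv_monomial, ← Nat.cast_smul_eq_nsmul R, smul_smul, hφ, Finset.sum_smul]

end WeightedHomogeneous

/-- The weight lattice of `F₄`, with coordinates in the basis `λ_1, …, λ_4` of fundamental weights;
thus `λ_k` is `Pi.single (k - 1) 1` and the `k`-th simple root is row `k - 1` of
`CartanMatrix.F₄`. -/
abbrev Weight : Type := Fin 4 → ℤ

/-- The weight of the variable `x_r`. The value `0` is taken at the two zero-weight variables `x_13`
and `x_14`, and at the indices out of range, where `x r = 0`. -/
def wt (r : ℕ) : Weight :=
  match r with
  | 1 => ![0, 0, 0, 1] | 2 => ![0, 0, 1, -1] | 3 => ![0, 1, -1, 0] | 4 => ![1, -1, 1, 0]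
  | 5 => ![1, 0, -1, 1] | 6 => ![-1, 0, 1, 0] | 7 => ![1, 0, 0, -1] | 8 => ![-1, 1, -1, 1]
  | 9 => ![-1, 1, 0, -1] | 10 => ![0, -1, 1, 1] | 11 => ![0, -1, 2, -1] | 12 => ![0, 0, -1, 2]
  | 15 => ![0, 0, 1, -2] | 16 => ![0, 1, -2, 1] | 17 => ![0, 1, -1, -1] | 18 => ![1, -1, 0, 1]
  | 19 => ![1, -1, 1, -1] | 20 => ![-1, 0, 0, 1] | 21 => ![1, 0, -1, 0] | 22 => ![-1, 0, 1, -1]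
  | 23 => ![-1, 1, -1, 0] | 24 => ![0, -1, 1, 0] | 25 => ![0, 0, -1, 1] | 26 => ![0, 0, 0, -1]
  | _ => 0

theorem wt_rev {r : ℕ} (hr : r ≤ 27) : wt (27 - r) = -wt r := by
  revert r
  decide

theorem wt_add_wt_rev {r : ℕ} (hr : r ≤ 27) : wt r + wt (27 - r) = 0 := by
  rw [wt_rev hr, add_neg_cancel]

/-- The polynomial `f` lies in the weight space of weight `n`, expressed as homogeneity for the
grading in which each variable has its own weight; in particular `0` has every weight. -/
abbrev HasWeight (f : A) (n : Weight) : Prop :=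
  IsWeightedHomogeneous (fun i : Fin 26 => wt (i + 1)) f n

theorem x_succ (i : Fin 26) : x (i + 1) = X i :=
  dif_pos ⟨by omega, by omega⟩

theorem d_succ (i : Fin 26) (f : A) : d (i + 1) f = pderiv i f :=
  dif_pos ⟨by omega, by omega⟩

theorem hasWeight_x (r : ℕ) : HasWeight (x r) (wt r) := by
  by_cases h : 1 ≤ r ∧ r ≤ 26
  · obtain ⟨i, rfl⟩ := exists_fin_add_one_eq h
    rw [x_succ]
    exact isWeightedHomogeneous_X ..
  · rw [x, dif_neg h]
    exact isWeightedHomogeneous_zero ..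

theorem hasWeight_x_mul_x {n : Weight} {a b : ℕ} (h : wt a + wt b = n) :
    HasWeight (x a * x b) n :=
  isWeightedHomogeneous_mul_of_add_eq (hasWeight_x a) (hasWeight_x b) h

theorem HasWeight.map_d {f : A} {n : Weight} {r : ℕ} (hf : HasWeight f (n + wt r)) :
    HasWeight (d r f) n := by
  by_cases h : 1 ≤ r ∧ r ≤ 26
  · obtain ⟨i, rfl⟩ := exists_fin_add_one_eq h
    rw [d_succ]
    exact IsWeightedHomogeneous.pderiv hf rfl
  · rw [d, dif_neg h]
    exact isWeightedHomogeneous_zero ..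

theorem HasWeight.x_mul_d {f : A} {n α : Weight} {a b : ℕ} (hf : HasWeight f (n + α))
    (h : wt a + α = wt b) : HasWeight (x a * d b f) n := by
  have hd : HasWeight (d b f) (n - wt a) := by
    apply HasWeight.map_d
    rwa [← h, ← add_assoc, sub_add_cancel]
  exact isWeightedHomogeneous_mul_of_add_eq (hasWeight_x a) hd (add_sub_cancel _ _)

section SimpleRootVectors

variable {f : A} {m n : Weight}

theorem HasWeight.map_F1 (hf : HasWeight f m) (h : n + CartanMatrix.F₄ 0 = m) :
    HasWeight (F1 f) n := by
  subst h
  simp only [F1, neg_mul]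
  apply_rules [IsWeightedHomogeneous.add, IsWeightedHomogeneous.sub, IsWeightedHomogeneous.neg,
    hf.x_mul_d] <;> decide

theorem HasWeight.map_F2 (hf : HasWeight f m) (h : n + CartanMatrix.F₄ 1 = m) :
    HasWeight (F2 f) n := by
  subst h
  simp only [F2, neg_mul]
  apply_rules [IsWeightedHomogeneous.add, IsWeightedHomogeneous.sub, IsWeightedHomogeneous.neg,
    hf.x_mul_d] <;> decide

theorem HasWeight.map_F3 (hf : HasWeight f m) (h : n + CartanMatrix.F₄ 2 = m) :
    HasWeight (F3 f) n := by
  subst h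
  simp only [F3, two_mul, mul_sub, mul_add]
  apply_rules [IsWeightedHomogeneous.add, IsWeightedHomogeneous.sub, hf.x_mul_d] <;> decide

theorem HasWeight.map_F4 (hf : HasWeight f m) (h : n + CartanMatrix.F₄ 3 = m) :
    HasWeight (F4 f) n := by
  subst h
  simp only [F4, two_mul, mul_sub, mul_add]
  apply_rules [IsWeightedHomogeneous.add, IsWeightedHomogeneous.sub, hf.x_mul_d] <;> decide

end SimpleRootVectors

theorem hasWeight_tau_X (i : Fin 26) : HasWeight (tau (X i)) (-wt (i + 1)) := by
  rw [tau, aeval_X]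
  split_ifs with h₁ h₂
  · rw [h₁]
    exact (isWeightedHomogeneous_X ..).neg
  · rw [h₂]
    exact (isWeightedHomogeneous_X ..).neg
  · rw [← wt_rev (by omega), show 27 - (i + 1 : ℕ) = 25 - i + 1 by omega]
    exact isWeightedHomogeneous_X ..

theorem HasWeight.map_tau {f : A} {n : Weight} (hf : HasWeight f n) : HasWeight (tau f) (-n) :=
  isWeightedHomogeneous_algHom hf tau (-AddMonoidHom.id Weight) hasWeight_tau_X

theorem hasWeight_zeta1 : HasWeight zeta1 (wt 1) := by
  have h₀ : HasWeight (2 * x 13 + x 14) 0 :=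
    (isWeightedHomogeneous_ofNat_mul 2 (hasWeight_x 13)).add (hasWeight_x 14)
  have h₁ : HasWeight (x 1 * (2 * x 13 + x 14)) (wt 1) :=
    isWeightedHomogeneous_mul_of_add_eq (hasWeight_x 1) h₀ (add_zero _)
  have h₃ {a b : ℕ} (h : wt a + wt b = wt 1) : HasWeight (3 * x a * x b) (wt 1) := by
    rw [mul_assoc]
    exact isWeightedHomogeneous_ofNat_mul 3 (hasWeight_x_mul_x h)
  exact (((h₁.sub (h₃ (by decide))).sub (h₃ (by decide))).add (h₃ (by decide))).sub
    (h₃ (by decide))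

theorem hasWeight_zeta2 : HasWeight zeta2 (wt 2) := hasWeight_zeta1.map_F4 (by decide)
theorem hasWeight_zeta3 : HasWeight zeta3 (wt 3) := hasWeight_zeta2.map_F3 (by decide)
theorem hasWeight_zeta4 : HasWeight zeta4 (wt 4) := (hasWeight_zeta3.map_F2 (by decide)).neg
theorem hasWeight_zeta5 : HasWeight zeta5 (wt 5) := hasWeight_zeta4.map_F3 (by decide)
theorem hasWeight_zeta6 : HasWeight zeta6 (wt 6) := (hasWeight_zeta4.map_F1 (by decide)).neg
theorem hasWeight_zeta7 : HasWeight zeta7 (wt 7) := hasWeight_zeta5.map_F4 (by decide)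
theorem hasWeight_zeta8 : HasWeight zeta8 (wt 8) := (hasWeight_zeta5.map_F1 (by decide)).neg
theorem hasWeight_zeta9 : HasWeight zeta9 (wt 9) := (hasWeight_zeta7.map_F1 (by decide)).neg
theorem hasWeight_zeta10 : HasWeight zeta10 (wt 10) := (hasWeight_zeta8.map_F2 (by decide)).neg
theorem hasWeight_zeta11 : HasWeight zeta11 (wt 11) := (hasWeight_zeta9.map_F2 (by decide)).neg
theorem hasWeight_zeta12 : HasWeight zeta12 (wt 12) := (hasWeight_zeta10.map_F3 (by decide)).neg
theorem hasWeight_zeta13 : HasWeight zeta13 (wt 13) := hasWeight_zeta12.map_F4 (by decide)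
theorem hasWeight_zeta14 : HasWeight zeta14 (wt 14) := hasWeight_zeta11.map_F3 (by decide)

theorem HasWeight.tau_rev {f : A} {r : ℕ} (hf : HasWeight f (wt (27 - r))) (hr : r ≤ 27) :
    HasWeight (tau f) (wt r) := by
  simpa only [wt_rev hr, neg_neg] using hf.map_tau

theorem hasWeight_zeta (r : ℕ) : HasWeight (zeta r) (wt r) := by
  unfold zeta
  split
  exacts [hasWeight_zeta1, hasWeight_zeta2, hasWeight_zeta3, hasWeight_zeta4, hasWeight_zeta5,
    hasWeight_zeta6, hasWeight_zeta7, hasWeight_zeta8, hasWeight_zeta9, hasWeight_zeta10,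
    hasWeight_zeta11, hasWeight_zeta12, hasWeight_zeta13, hasWeight_zeta14,
    hasWeight_zeta12.tau_rev (by decide), hasWeight_zeta11.tau_rev (by decide),
    hasWeight_zeta10.tau_rev (by decide), hasWeight_zeta9.tau_rev (by decide),
    hasWeight_zeta8.tau_rev (by decide), hasWeight_zeta7.tau_rev (by decide),
    hasWeight_zeta6.tau_rev (by decide), hasWeight_zeta5.tau_rev (by decide),
    hasWeight_zeta4.tau_rev (by decide), hasWeight_zeta3.tau_rev (by decide),
    hasWeight_zeta2.tau_rev (by decide), hasWeight_zeta1.tau_rev (by decide),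
    isWeightedHomogeneous_zero ..]

theorem hasWeight_theta : HasWeight theta (Pi.single 2 1) := by
  have h₂ : HasWeight (-(x 2 * x 13) + x 1 * x 15 - x 3 * x 11 + x 4 * x 9 - x 6 * x 7) (wt 2) := by
    apply_rules [IsWeightedHomogeneous.add, IsWeightedHomogeneous.sub, IsWeightedHomogeneous.neg,
      hasWeight_x_mul_x] <;> decide
  have h₁ : HasWeight (x 2 * x 12 + x 3 * x 10 - x 4 * x 8 + x 5 * x 6) (wt 1) := by
    apply_rules [IsWeightedHomogeneous.add, IsWeightedHomogeneous.sub, hasWeight_x_mul_x] <;> decide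
  exact (isWeightedHomogeneous_mul_of_add_eq (hasWeight_x 1) h₂ (by decide)).add
    (isWeightedHomogeneous_mul_of_add_eq (hasWeight_x 2) h₁ (by decide))

theorem hasWeight_eta1 : HasWeight eta1 0 := by
  have hsum : HasWeight (∑ r ∈ Finset.Icc 1 12, x r * x (27 - r)) 0 :=
    .sum _ _ _ fun r hr => hasWeight_x_mul_x (wt_add_wt_rev (by grind))
  rw [eta1, sq, sq]
  exact (((isWeightedHomogeneous_ofNat_mul 3 hsum).sub (hasWeight_x_mul_x (add_zero 0))).sub
    (hasWeight_x_mul_x (add_zero 0))).sub (hasWeight_x_mul_x (add_zero 0))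

theorem hasWeight_eta2 : HasWeight eta2 0 := by
  have hmul {a b : ℕ} (h : wt a + wt b = 0) : HasWeight (x a * zeta b) 0 :=
    isWeightedHomogeneous_mul_of_add_eq (hasWeight_x a) (hasWeight_zeta b) h
  have hsum : HasWeight (∑ r ∈ Finset.Icc 1 12, (zeta r * x (27 - r) + x r * zeta (27 - r))) 0 := by
    refine .sum _ _ _ fun r hr => .add ?_ (hmul (wt_add_wt_rev (by grind)))
    rw [mul_comm]
    exact hmul (by rw [add_comm, wt_add_wt_rev (by grind)])
  simp only [eta2, mul_assoc]
  exact ((((isWeightedHomogeneous_ofNat_mul 3 hsum).sub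
    (isWeightedHomogeneous_ofNat_mul 2 (hmul (add_zero 0)))).sub (hmul (add_zero 0))).sub
    (hmul (add_zero 0))).sub (isWeightedHomogeneous_ofNat_mul 2 (hmul (add_zero 0)))

/-- The action on `A` of the `k`-th element of the Cartan basis, written through the weights of the
variables; its values at `k = 0, …, 3` are the operators `H1, …, H4`. -/
def cartan (k : Fin 4) (f : A) : A :=
  ∑ r ∈ Finset.Icc 1 26, wt r k • (x r * d r f)

theorem HasWeight.cartan_eq {f : A} {n : Weight} (hf : HasWeight f n) (k : Fin 4) :
    cartan k f = (n k : ℂ) • f := by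
  simp only [cartan, sum_Icc_one_eq_sum_fin, x_succ, d_succ, ← Int.cast_smul_eq_zsmul ℂ]
  exact sum_map_weight_smul_X_mul_pderiv hf
    ((Int.castAddHom ℂ).comp (Pi.evalAddMonoidHom (fun _ : Fin 4 => ℤ) k))

section CartanBasis

variable (f : A)

theorem H1_eq_cartan : H1 f = cartan 0 f := by
  simp only [H1, cartan, wt, Nat.reduceLeDiff, Nat.reduceAdd, Finset.sum_Icc_succ_top,
    Finset.Icc_self, Finset.sum_singleton, Matrix.cons_val, Pi.zero_apply]
  ring

theorem H2_eq_cartan : H2 f = cartan 1 f := by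
  simp only [H2, cartan, wt, Nat.reduceLeDiff, Nat.reduceAdd, Finset.sum_Icc_succ_top,
    Finset.Icc_self, Finset.sum_singleton, Matrix.cons_val, Pi.zero_apply]
  ring

theorem H3_eq_cartan : H3 f = cartan 2 f := by
  simp only [H3, cartan, wt, Nat.reduceLeDiff, Nat.reduceAdd, Finset.sum_Icc_succ_top,
    Finset.Icc_self, Finset.sum_singleton, Matrix.cons_val, Pi.zero_apply]
  ring

theorem H4_eq_cartan : H4 f = cartan 3 f := by
  simp only [H4, cartan, wt, Nat.reduceLeDiff, Nat.reduceAdd, Finset.sum_Icc_succ_top,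
    Finset.Icc_self, Finset.sum_singleton, Matrix.cons_val, Pi.zero_apply]
  ring

end CartanBasis

theorem hasWeight_monomial (m1 m2 m3 m4 m5 : ℕ) :
    HasWeight (x 1 ^ m1 * zeta1 ^ m2 * theta ^ m3 * eta1 ^ m4 * eta2 ^ m5)
      (m3 • Pi.single 2 1 + (m1 + m2) • Pi.single 3 1) := by
  have h : wt 1 = Pi.single 3 1 := by decide
  have hmul := (((((hasWeight_x 1).pow m1).mul (hasWeight_zeta1.pow m2)).mul
    (hasWeight_theta.pow m3)).mul (hasWeight_eta1.pow m4)).mul (hasWeight_eta2.pow m5)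
  rwa [h, smul_zero, smul_zero, add_zero, add_zero, ← add_smul, add_comm] at hmul

/-- `x_1^{m_1} ζ_1^{m_2} ϑ^{m_3} η_1^{m_4} η_2^{m_5}` is a weight vector
of weight `m_3 λ_3 + (m_1 + m_2) λ_4`. -/
theorem stmt17 (m1 m2 m3 m4 m5 : ℕ) :
    H1 (x 1 ^ m1 * zeta1 ^ m2 * theta ^ m3 * eta1 ^ m4 * eta2 ^ m5) = 0 ∧
    H2 (x 1 ^ m1 * zeta1 ^ m2 * theta ^ m3 * eta1 ^ m4 * eta2 ^ m5) = 0 ∧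
    H3 (x 1 ^ m1 * zeta1 ^ m2 * theta ^ m3 * eta1 ^ m4 * eta2 ^ m5) =
      (m3 : ℂ) • (x 1 ^ m1 * zeta1 ^ m2 * theta ^ m3 * eta1 ^ m4 * eta2 ^ m5) ∧
    H4 (x 1 ^ m1 * zeta1 ^ m2 * theta ^ m3 * eta1 ^ m4 * eta2 ^ m5) =
      ((m1 + m2 : ℕ) : ℂ) • (x 1 ^ m1 * zeta1 ^ m2 * theta ^ m3 * eta1 ^ m4 * eta2 ^ m5) := by
  have hM := hasWeight_monomial m1 m2 m3 m4 m5
  rw [H1_eq_cartan, H2_eq_cartan, H3_eq_cartan, H4_eq_cartan]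
  refine ⟨?_, ?_, ?_, ?_⟩
  · simpa using hM.cartan_eq 0
  · simpa using hM.cartan_eq 1
  · simpa using hM.cartan_eq 2
  · simpa using hM.cartan_eq 3
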